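/- arXiv:2302.05352 — 2 statements merged into one kernel-verified Lean document; each statement's English description precedes it below -/
import Mathlib

section
/- Let (X, 𝒯, P, ≤, {σ_x : x ∈ X}) be a typed topological space and p ∈ P. If a subset A ⊆ X is type-p-connected, then p⊢CLₙ(A) is type-p-connected for every integer n > 0. -/
open Set

/-- A typed topological space: a topological space `X` together with a partially
ordered set `P` of types and, for each `x : X`, a partial assignment `σ x` of
types to open sets containing `x`, such that on its domain the assignment is
order-reflecting: `σ x U ≤ σ x V ↔ U ⊆ V`. -/
structure TypedSpace (X : Type*) (P : Type*) [TopologicalSpace X] [PartialOrder P] where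
  σ : X → Set X → Option P
  dom_mem : ∀ x U p, σ x U = some p → IsOpen U ∧ x ∈ U
  mono : ∀ x U V pU pV, σ x U = some pU → σ x V = some pV → (pU ≤ pV ↔ U ⊆ V)

namespace TypedSpace

variable {X P : Type*} [TopologicalSpace X] [PartialOrder P]

/-- `U` is a type-`p` open neighborhood of `x`, written `p ⊢ U(x)`. -/
def IsNbhd (T : TypedSpace X P) (p : P) (x : X) (U : Set X) : Prop :=
  T.σ x U = some p

/-- `x` is a `p`-accumulation point of `A`: every type-`p` open neighborhood
of `x` meets `A`. -/
def IsAccPt (T : TypedSpace X P) (p : P) (A : Set X) (x : X) : Prop :=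
  ∀ U, T.IsNbhd p x U → (U ∩ A).Nonempty

/-- The direct `p`-closure `p⊢CL₁(A) = A ∪ {x : x is a p-accumulation point of A}`. -/
def CL1 (T : TypedSpace X P) (p : P) (A : Set X) : Set X :=
  A ∪ {x | T.IsAccPt p A x}

/-- Iterated `p`-closures: `p⊢CL₀(A) = A`, `p⊢CLₙ₊₁(A) = p⊢CL₁(p⊢CLₙ(A))`. -/
def CLn (T : TypedSpace X P) (p : P) : ℕ → Set X → Set X
  | 0, A => A
  | n + 1, A => T.CL1 p (T.CLn p n A)

/-- The transitive `p`-closure `p⊢tr(A) = ⋃ₙ p⊢CLₙ(A)`. -/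
def tr (T : TypedSpace X P) (p : P) (A : Set X) : Set X :=
  ⋃ n, T.CLn p n A

/-- The tracks: `p⊢Track₀(A) = A`, and `p⊢Trackᵢ(A) = p⊢CLᵢ(A) \ p⊢CLᵢ₋₁(A)` for `i ≥ 1`. -/
def Track (T : TypedSpace X P) (p : P) (i : ℕ) (A : Set X) : Set X :=
  if i = 0 then A else T.CLn p i A \ T.CLn p (i - 1) A

/-- `Umin` assigns to each point a least type-`p` open neighborhood. -/
def HasLeast (T : TypedSpace X P) (p : P) (Umin : X → Set X) : Prop :=
  ∀ x, T.IsNbhd p x (Umin x) ∧ ∀ V, T.IsNbhd p x V → Umin x ⊆ V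

/-- The type of English-text "σ has least p-neighborhood": some least neighborhood
assignment exists. -/
def HasLeastNbhd (T : TypedSpace X P) (p : P) : Prop :=
  ∃ Umin : X → Set X, T.HasLeast p Umin

/-- `A` is type-`p`-connected: there do not exist two collections of type-`p`
open neighborhoods `{p⊢U(xᵢ) : i ∈ I}`, `{p⊢V(xⱼ) : j ∈ J}` with `I, J` nonempty,
`A = {xᵢ} ∪ {xⱼ}` and `(⋃ U(xᵢ)) ∩ (⋃ V(xⱼ)) = ∅`. -/
def Connected (T : TypedSpace X P) (p : P) (A : Set X) : Prop :=
  ¬ ∃ (s t : Set X) (U V : X → Set X),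
      s.Nonempty ∧ t.Nonempty ∧ A = s ∪ t ∧
      (∀ x ∈ s, T.IsNbhd p x (U x)) ∧ (∀ y ∈ t, T.IsNbhd p y (V y)) ∧
      (⋃ x ∈ s, U x) ∩ (⋃ y ∈ t, V y) = ∅

/-- The type-`p`-connected component of `x`: the union of all type-`p`-connected
subsets containing `x`. -/
def Comp (T : TypedSpace X P) (p : P) (x : X) : Set X :=
  ⋃₀ {A : Set X | x ∈ A ∧ T.Connected p A}

/-- The space is `p`-symmetrically typed. -/
def SymTyped (T : TypedSpace X P) (p : P) : Prop :=
  ∀ x y : X, (∃ U, T.IsNbhd p x U ∧ y ∉ U) → ∃ V, T.IsNbhd p y V ∧ x ∉ V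

/-- `D` and `D'` are `p`-closure disjoint. -/
def ClosureDisjoint (T : TypedSpace X P) (p : P) (D D' : Set X) : Prop :=
  T.tr p D ∩ T.tr p D' = ∅

/-- `D` is `p`-closure connected: it cannot be partitioned into two nonempty
`p`-closure disjoint subsets. -/
def ClosureConnected (T : TypedSpace X P) (p : P) (D : Set X) : Prop :=
  ¬ ∃ E E' : Set X, E.Nonempty ∧ E'.Nonempty ∧ E ∪ E' = D ∧ E ∩ E' = ∅ ∧
      T.ClosureDisjoint p E E'

/-- The cluster `p⊢tr(x)` is straight. -/
def StraightAt (T : TypedSpace X P) (p : P) (x : X) : Prop :=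
  ∀ i j : ℕ, 0 < i → i < j → ∀ y z : X,
    y ∈ T.Track p i {x} → z ∈ T.Track p j {x} →
      y ∈ T.CL1 p {z} → z ∈ T.CL1 p {y}

/-- `X` is `p`-straight: every cluster `p⊢tr(x)` is straight. -/
def Straight (T : TypedSpace X P) (p : P) : Prop :=
  ∀ x : X, T.StraightAt p x

/-- `X` is `(p, q)`-uniformly typed. -/
def UniformlyTyped (T : TypedSpace X P) (p q : P) : Prop :=
  ∀ (x : X) (j k : ℕ), (T.CLn p j {x} ∩ T.CLn q k {x}).Nonempty →
    T.CLn p j {x} ⊆ T.CLn q k {x}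

/-- The cluster `q⊢tr(x)` is `(p,q)`-straight: for `y, z, w ∈ q⊢tr(x)` with
`z, w ∈ p⊢tr(y)`, `index_{p,y}(z) ≤ index_{p,y}(w)` implies
`index_{q,y}(z) ≤ index_{q,y}(w)` (indices being the track numbers). -/
def PQStraightAt (T : TypedSpace X P) (p q : P) (x : X) : Prop :=
  ∀ y z w : X, y ∈ T.tr q {x} → z ∈ T.tr q {x} → w ∈ T.tr q {x} →
    z ∈ T.tr p {y} → w ∈ T.tr p {y} →
    ∀ iz iw : ℕ, z ∈ T.Track p iz {y} → w ∈ T.Track p iw {y} → iz ≤ iw →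
      ∀ jz jw : ℕ, z ∈ T.Track q jz {y} → w ∈ T.Track q jw {y} → jz ≤ jw

end TypedSpace

/-!
Suppose the points of `s` and those of `t` have type-`p` neighborhoods such that the union over `s`
is disjoint from the union over `t`. Then no point of `s` lies in the direct `p`-closure of `t`, so
a set `A ⊆ s ∪ t` whose direct closure contains a nonempty `s` cannot lie inside `t`, that is, it
meets `s`. Hence every separation of a set between `A` and `p⊢CL₁(A)` restricts to one of `A`.
-/

namespace TypedSpace

variable {X P : Type*} [TopologicalSpace X] [PartialOrder P] {T : TypedSpace X P} {p : P}
  {A B s s' t t' : Set X} {x : X}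

theorem IsNbhd.mem {U : Set X} (hU : T.IsNbhd p x U) : x ∈ U :=
  (T.dom_mem x U p hU).2

theorem IsAccPt.mono (hAB : A ⊆ B) (hx : T.IsAccPt p A x) : T.IsAccPt p B x :=
  fun U hU => (hx U hU).mono (inter_subset_inter_right U hAB)

theorem CL1_mono (hAB : A ⊆ B) : T.CL1 p A ⊆ T.CL1 p B :=
  union_subset_union hAB fun _ hx => hx.mono hAB

theorem subset_CL1 : A ⊆ T.CL1 p A :=
  subset_union_left

/-- The points of `s` and those of `t` have type-`p` neighborhoods, one chosen for each point,
such that the union over `s` is disjoint from the union over `t`. This is the typed counterpart of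
`SeparatedNhds`; a set is type-`p`-connected if it is not the union of two such nonempty sets. -/
def NbhdSeparated (T : TypedSpace X P) (p : P) (s t : Set X) : Prop :=
  ∃ U V : X → Set X, (∀ x ∈ s, T.IsNbhd p x (U x)) ∧ (∀ y ∈ t, T.IsNbhd p y (V y)) ∧
    Disjoint (⋃ x ∈ s, U x) (⋃ y ∈ t, V y)

theorem NbhdSeparated.symm (h : T.NbhdSeparated p s t) : T.NbhdSeparated p t s :=
  let ⟨U, V, hU, hV, hUV⟩ := h
  ⟨V, U, hV, hU, hUV.symm⟩

theorem NbhdSeparated.mono (hs : s' ⊆ s) (ht : t' ⊆ t) (h : T.NbhdSeparated p s t) :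
    T.NbhdSeparated p s' t' :=
  let ⟨U, V, hU, hV, hUV⟩ := h
  ⟨U, V, fun x hx => hU x (hs hx), fun y hy => hV y (ht hy),
    hUV.mono (biUnion_subset_biUnion_left hs) (biUnion_subset_biUnion_left ht)⟩

theorem NbhdSeparated.disjoint_CL1_right (h : T.NbhdSeparated p s t) :
    Disjoint s (T.CL1 p t) := by
  obtain ⟨U, V, hU, hV, hUV⟩ := h
  have disjoint_nbhd : ∀ x ∈ s, Disjoint (U x) t := fun x hx =>
    hUV.mono (subset_biUnion_of_mem hx) fun y hy => mem_biUnion hy (hV y hy).mem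
  refine disjoint_left.2 fun x hx hxt => ?_
  rcases hxt with hxt | hacc
  · exact disjoint_left.1 (disjoint_nbhd x hx) (hU x hx).mem hxt
  · exact not_disjoint_iff_nonempty_inter.2 (hacc (U x) (hU x hx)) (disjoint_nbhd x hx)

theorem NbhdSeparated.inter_nonempty_of_subset_CL1 (h : T.NbhdSeparated p s t)
    (hs : s.Nonempty) (hA : A ⊆ s ∪ t) (hsA : s ⊆ T.CL1 p A) : (s ∩ A).Nonempty := by
  by_contra hsA_empty
  have hAt : A ⊆ t := fun a ha => (hA ha).resolve_left fun has => hsA_empty ⟨a, has, ha⟩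
  have hst : s ⊆ T.CL1 p t := hsA.trans (CL1_mono hAt)
  exact hs.ne_empty (h.disjoint_CL1_right.eq_bot_of_le hst)

theorem connected_iff_not_nbhdSeparated : T.Connected p A ↔
    ∀ s t, s.Nonempty → t.Nonempty → A = s ∪ t → ¬ T.NbhdSeparated p s t := by
  simp only [Connected, NbhdSeparated, disjoint_iff_inter_eq_empty, not_exists, not_and]
  exact ⟨fun h s t hs ht hst U V => h s t U V hs ht hst,
    fun h s t U V hs ht hst => h s t hs ht hst U V⟩

theorem Connected.of_subset_CL1 (hA : T.Connected p A) (hAB : A ⊆ B) (hBA : B ⊆ T.CL1 p A) :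
    T.Connected p B := by
  rw [connected_iff_not_nbhdSeparated] at hA ⊢
  rintro s t hs ht rfl hsep
  have hsA : (s ∩ A).Nonempty :=
    hsep.inter_nonempty_of_subset_CL1 hs hAB (subset_union_left.trans hBA)
  have htA : (t ∩ A).Nonempty :=
    hsep.symm.inter_nonempty_of_subset_CL1 ht (union_comm s t ▸ hAB)
      (subset_union_right.trans hBA)
  have hA_eq : A = s ∩ A ∪ t ∩ A := by
    rw [← union_inter_distrib_right, inter_eq_right.2 hAB]
  exact hA _ _ hsA htA hA_eq (hsep.mono inter_subset_left inter_subset_left)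

theorem Connected.CL1 (hA : T.Connected p A) : T.Connected p (T.CL1 p A) :=
  hA.of_subset_CL1 subset_CL1 Subset.rfl

theorem Connected.CLn (hA : T.Connected p A) (n : ℕ) : T.Connected p (T.CLn p n A) := by
  induction n with
  | zero => exact hA
  | succ n ih => exact ih.CL1

end TypedSpace

/-- If `A` is type-p-connected, then `p⊢CLₙ(A)` is type-p-connected
for every `n > 0`. -/
theorem stmt_2 {X P : Type*} [TopologicalSpace X] [PartialOrder P]
    (T : TypedSpace X P) (p : P) (A : Set X) (hA : T.Connected p A)
    (n : ℕ) (hn : 0 < n) :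
    T.Connected p (T.CLn p n A) :=
  hA.CLn n
end

section
/- Let (X, 𝒯, P, ≤, {σ_x : x ∈ X}) be a typed topological space with X finite, and let p ∈ P. A subset D ⊆ X is p-closure connected if and only if for any two points z, w ∈ D there exists a finite sequence z = w₁, w₂, ..., w_t = w such that (1) each w_i ∈ D, and (2) p⊢tr(w_i) ∩ p⊢tr(w_{i+1}) ≠ ∅ for all i = 1, ..., t−1. -/
open Set

/-!
A point has at most one type-`p` open neighborhood, since `σ x` is injective on its domain.
Being a `p`-accumulation point is therefore a condition on a single neighborhood or on none, so that
`p⊢tr` commutes with nonempty unions and `p⊢tr(A) = ⋃ a ∈ A, p⊢tr(a)` for nonempty `A`. Closure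
disjointness of two nonempty sets thus says that no edge of the graph
`{(x, y) | p⊢tr(x) ∩ p⊢tr(y) ≠ ∅}` runs from one to the other, and the theorem becomes the fact that
a graph is connected exactly when its vertex set does not split into two parts without an edge
between them.
-/

section Reachability

open Relation

variable {α : Type*} {r : α → α → Prop} {s : Set α} {a b : α}

theorem reflTransGen_iff_exists_seq :
    ReflTransGen r a b ↔
      ∃ (t : ℕ) (f : ℕ → α), f 0 = a ∧ f t = b ∧ ∀ i < t, r (f i) (f (i + 1)) := by
  constructor
  · intro h
    induction h using ReflTransGen.head_induction_on with
    | refl => exact ⟨0, fun _ ↦ b, rfl, rfl, fun _ hi ↦ absurd hi (Nat.not_lt_zero _)⟩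
    | @head a _ hac _ ih =>
      obtain ⟨t, f, rfl, hft, hf⟩ := ih
      refine ⟨t + 1, fun | 0 => a | i + 1 => f i, rfl, hft, ?_⟩
      rintro (_ | i) hi
      · exact hac
      · exact hf i (Nat.lt_of_succ_lt_succ hi)
  · rintro ⟨t, f, rfl, rfl, hf⟩
    have h : ReflTransGen (fun i j ↦ r (f i) (f j)) 0 t :=
      reflTransGen_of_succ_of_le _ (fun i hi ↦ hf i hi.2) t.zero_le
    exact h.lift f fun _ _ hij ↦ hij

/-- `b` is reachable from `a` along finitely many `r`-steps, each of which ends in `s`. Only the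
endpoints of steps are constrained, so `a` itself need not lie in `s`. -/
def ReachableIn (r : α → α → Prop) (s : Set α) : α → α → Prop :=
  ReflTransGen fun x y ↦ r x y ∧ y ∈ s

theorem reachableIn_iff_exists_seq (ha : a ∈ s) :
    ReachableIn r s a b ↔
      ∃ (t : ℕ) (f : ℕ → α),
        f 0 = a ∧ f t = b ∧ (∀ i ≤ t, f i ∈ s) ∧ ∀ i < t, r (f i) (f (i + 1)) := by
  refine reflTransGen_iff_exists_seq.trans <| exists₂_congr fun t f ↦
    and_congr_right fun h0 ↦ and_congr_right fun _ ↦ ⟨fun hf ↦ ⟨?_, fun i hi ↦ (hf i hi).1⟩, ?_⟩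
  · rintro (_ | i) hi
    · exact h0 ▸ ha
    · exact (hf i hi).2
  · rintro ⟨hfs, hf⟩ i hi
    exact ⟨hf i hi, hfs (i + 1) hi⟩

theorem ReachableIn.mem_left_of_separated {E E' : Set α} (hsep : ∀ x ∈ E, ∀ y ∈ E', ¬ r x y)
    (hab : ReachableIn r (E ∪ E') a b) (ha : a ∈ E) : b ∈ E := by
  induction hab with
  | refl => exact ha
  | tail _ hxy hx => exact hxy.2.resolve_right fun hy ↦ hsep _ hx _ hy hxy.1

theorem not_exists_separation_iff_reachableIn :
    (¬ ∃ E E' : Set α, E.Nonempty ∧ E'.Nonempty ∧ E ∪ E' = s ∧ E ∩ E' = ∅ ∧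
        ∀ x ∈ E, ∀ y ∈ E', ¬ r x y) ↔
      ∀ a ∈ s, ∀ b ∈ s, ReachableIn r s a b := by
  constructor
  · intro h a ha b hb
    by_contra hab
    let C := {x | ReachableIn r s a x}
    refine h ⟨s ∩ C, s \ C, ⟨a, ha, ReflTransGen.refl⟩, ⟨b, hb, hab⟩, inter_union_sdiff s C,
      disjoint_sdiff_inter.symm.inter_eq, ?_⟩
    rintro x ⟨-, hax⟩ y ⟨hys, hay⟩ hxy
    exact hay (hax.tail ⟨hxy, hys⟩)
  · rintro h ⟨E, E', ⟨a, ha⟩, ⟨b, hb⟩, rfl, hdisj, hsep⟩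
    have hbE : b ∈ E := (h a (.inl ha) b (.inr hb)).mem_left_of_separated hsep ha
    exact hdisj.subset ⟨hbE, hb⟩

end Reachability

namespace TypedSpace

variable {X P : Type*} {ι : Sort*} [TopologicalSpace X] [PartialOrder P]
  {T : TypedSpace X P} {p : P} {x : X} {U V A D E E' : Set X}

theorem IsNbhd.unique (hU : T.IsNbhd p x U) (hV : T.IsNbhd p x V) : U = V :=
  Subset.antisymm ((T.mono x U V p p hU hV).1 le_rfl) ((T.mono x V U p p hV hU).1 le_rfl)

theorem IsNbhd.isAccPt_iff (hU : T.IsNbhd p x U) : T.IsAccPt p A x ↔ (U ∩ A).Nonempty :=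
  ⟨fun h ↦ h U hU, fun h _ hV ↦ hU.unique hV ▸ h⟩

theorem isAccPt_iUnion [Nonempty ι] {A : ι → Set X} :
    T.IsAccPt p (⋃ i, A i) x ↔ ∃ i, T.IsAccPt p (A i) x := by
  by_cases hx : ∃ U, T.IsNbhd p x U
  · obtain ⟨U, hU⟩ := hx
    simp only [hU.isAccPt_iff, inter_iUnion, nonempty_iUnion]
  · have hacc (B : Set X) : T.IsAccPt p B x := fun U hU ↦ absurd ⟨U, hU⟩ hx
    simp only [hacc, exists_const]

theorem CL1_iUnion [Nonempty ι] (A : ι → Set X) :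
    T.CL1 p (⋃ i, A i) = ⋃ i, T.CL1 p (A i) := by
  simp only [CL1, isAccPt_iUnion, ofPred_exists, iUnion_union_distrib]

theorem CLn_iUnion [Nonempty ι] (n : ℕ) (A : ι → Set X) :
    T.CLn p n (⋃ i, A i) = ⋃ i, T.CLn p n (A i) := by
  induction n with
  | zero => rfl
  | succ n ih => simp only [CLn, ih, CL1_iUnion]

theorem tr_iUnion [Nonempty ι] (A : ι → Set X) : T.tr p (⋃ i, A i) = ⋃ i, T.tr p (A i) := by
  simp only [tr, CLn_iUnion]
  exact iUnion_comm _

theorem tr_eq_biUnion_singleton (hA : A.Nonempty) : T.tr p A = ⋃ a ∈ A, T.tr p {a} := by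
  have : Nonempty A := hA.to_subtype
  calc
    T.tr p A = T.tr p (⋃ a : A, {a.1}) := by rw [iUnion_of_singleton_coe]
    _ = ⋃ a : A, T.tr p {a.1} := tr_iUnion _
    _ = ⋃ a ∈ A, T.tr p {a} := iUnion_coe_set A fun a ↦ T.tr p {a.1}

theorem closureDisjoint_iff_forall_not_nonempty (hE : E.Nonempty) (hE' : E'.Nonempty) :
    T.ClosureDisjoint p E E' ↔
      ∀ x ∈ E, ∀ y ∈ E', ¬ (T.tr p {x} ∩ T.tr p {y}).Nonempty := by
  rw [ClosureDisjoint, tr_eq_biUnion_singleton hE, tr_eq_biUnion_singleton hE',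
    ← disjoint_iff_inter_eq_empty, disjoint_iUnion₂_left]
  simp only [disjoint_iUnion₂_right, not_nonempty_iff_eq_empty, ← disjoint_iff_inter_eq_empty]

theorem closureConnected_iff_reachableIn :
    T.ClosureConnected p D ↔
      ∀ z ∈ D, ∀ w ∈ D,
        ReachableIn (fun x y ↦ (T.tr p {x} ∩ T.tr p {y}).Nonempty) D z w := by
  rw [← not_exists_separation_iff_reachableIn]
  exact not_congr <| exists₂_congr fun _ _ ↦ and_congr_right fun hE ↦ and_congr_right fun hE' ↦
    and_congr_right' <| and_congr_right' <| closureDisjoint_iff_forall_not_nonempty hE hE'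

end TypedSpace

theorem stmt_12_general {X P : Type*} [TopologicalSpace X] [PartialOrder P]
    (T : TypedSpace X P) (p : P) (D : Set X) :
    T.ClosureConnected p D ↔
      ∀ z ∈ D, ∀ w ∈ D, ∃ (t : ℕ) (f : ℕ → X),
        f 0 = z ∧ f t = w ∧ (∀ i ≤ t, f i ∈ D) ∧
        ∀ i < t, (T.tr p {f i} ∩ T.tr p {f (i + 1)}).Nonempty :=
  TypedSpace.closureConnected_iff_reachableIn.trans <|
    forall₄_congr fun _ hz _ _ ↦ reachableIn_iff_exists_seq hz

/-- `D` is p-closure connected iff any two points of `D` are joined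
by a finite chain `z = w₀, …, w_t = w` inside `D` with consecutively meeting
transitive p-closures. -/
theorem stmt_12 {X P : Type*} [TopologicalSpace X] [PartialOrder P] [Finite X]
    (T : TypedSpace X P) (p : P) (D : Set X) :
    T.ClosureConnected p D ↔
      ∀ z ∈ D, ∀ w ∈ D, ∃ (t : ℕ) (f : ℕ → X),
        f 0 = z ∧ f t = w ∧ (∀ i ≤ t, f i ∈ D) ∧
        ∀ i < t, (T.tr p {f i} ∩ T.tr p {f (i + 1)}).Nonempty :=
  stmt_12_general T p D
end
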